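/- Let c ∈ ℂ and ℓ ∈ (0, +∞]. Let (q_n) and (h_n) be sequences of reals with q_n > 1, h_n > 0, q_n → 1, h_n → 0 and h_n/(q_n − 1) → ℓ. Then the functions e_c^{(q_n,h_n)} converge, uniformly on every compact subset of ℂ ∖ [0,+∞), to the function x ↦ exp(c·Log(−x)), the principal branch of (−x)^c. -/

import Mathlib

/-!
The product defining `e_c^{(q,h)}` is a discretisation of `(1 - z)^c`. Write `p = e^{-δ}` and
`y = p^j z`. Each factor has logarithm `-log ((1 - e^{-cδ} y) / (1 - y))`, which to first order in
`δ` is `-c` times `log ((1 - e^{-δ} y) / (1 - y))`, and the sum of the latter over `j` telescopes to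
`-log (1 - z)`. Together with the prefactor this gives `c (log (h / (1 - p)) + log (1 - z))`, that
is `c log (h - x)`, which tends to `c log (-x)`.

The second order errors are `O(δ² ‖y‖ / ‖1 - y‖²)`. As `-x` stays in a sector, `‖1 - y‖` is
comparable to its value at `x = -1`, where the sum of `p^j / (1 - y)²` is again bounded by a
telescoping series. The total error is `O(h + (q - 1))`, uniformly for `x` in a compact set.
-/

open Complex Filter

noncomputable section

/-- `z(x) = (1-p)x/h + p` with `p = 1/q`. -/
def zc (q h : ℝ) (x : ℂ) : ℂ := (1 - (q : ℂ)⁻¹) * x / (h : ℂ) + (q : ℂ)⁻¹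

/-- The `j`-th factor of the infinite product defining `e_c^{(q,h)}`. -/
def charTerm (q h : ℝ) (c : ℂ) (x : ℂ) (j : ℕ) : ℂ :=
  (1 - (q : ℂ)⁻¹ ^ j * zc q h x) / (1 - Complex.exp (((j : ℂ) + c) * Real.log q⁻¹) * zc q h x)

/-- The character `e_c^{(q,h)}` for `q > 1`, `h > 0`. -/
def echar (q h : ℝ) (c : ℂ) (x : ℂ) : ℂ :=
  ((h / (1 - q⁻¹) : ℝ) : ℂ) ^ c * ∏' j : ℕ, charTerm q h c x j

open scoped Topology

/-! ### Logarithms of quotients -/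

lemma norm_div_two_le_norm_one_sub_exp_neg_mul {s y : ℂ} (hs : ‖s‖ ≤ 1)
    (hsy : 4 * (‖s‖ * ‖y‖) ≤ ‖1 - y‖) : ‖1 - y‖ / 2 ≤ ‖1 - exp (-s) * y‖ := by
  have hexp : ‖exp (-s) - 1‖ ≤ 2 * ‖s‖ := by
    simpa only [norm_neg] using norm_exp_sub_one_le (x := -s) (by rwa [norm_neg])
  have hdiff : ‖(1 - y) - (1 - exp (-s) * y)‖ ≤ 2 * ‖s‖ * ‖y‖ := by
    rw [show (1 - y) - (1 - exp (-s) * y) = (exp (-s) - 1) * y by ring, norm_mul]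
    gcongr
  linarith [norm_sub_norm_le (1 - y) (1 - exp (-s) * y)]

lemma one_sub_exp_neg_mul_div_mem_slitPlane {s y : ℂ} (hy : y ≠ 1) (hs : ‖s‖ ≤ 1)
    (hsy : 4 * (‖s‖ * ‖y‖) ≤ ‖1 - y‖) : (1 - exp (-s) * y) / (1 - y) ∈ slitPlane := by
  have hy0 : 1 - y ≠ 0 := sub_ne_zero.2 hy.symm
  have hexp : ‖1 - exp (-s)‖ ≤ 2 * ‖s‖ := by
    simpa only [norm_neg, norm_sub_rev] using norm_exp_sub_one_le (x := -s) (by rwa [norm_neg])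
  have hsmall : ‖(1 - exp (-s)) * y / (1 - y)‖ < 1 := by
    rw [norm_div, norm_mul, div_lt_one (norm_pos_iff.2 hy0)]
    calc ‖1 - exp (-s)‖ * ‖y‖ ≤ 2 * ‖s‖ * ‖y‖ := by gcongr
      _ < ‖1 - y‖ := by linarith [norm_pos_iff.2 hy0]
  convert mem_slitPlane_of_norm_lt_one hsmall using 1
  field_simp
  ring

lemma hasDerivAt_log_one_sub_exp_neg_mul_div {s y : ℂ} (hy : y ≠ 1)
    (hs : (1 - exp (-s) * y) / (1 - y) ∈ slitPlane) :
    HasDerivAt (fun σ => log ((1 - exp (-σ) * y) / (1 - y)))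
      (exp (-s) * y / (1 - exp (-s) * y)) s := by
  have hnum : HasDerivAt (fun σ => 1 - exp (-σ) * y) (exp (-s) * y) s := by
    simpa using ((hasDerivAt_neg s).cexp.mul_const y).const_sub 1
  convert (hnum.div_const (1 - y)).clog hs using 1
  have hy0 : 1 - y ≠ 0 := sub_ne_zero.2 hy.symm
  have hnum0 : 1 - exp (-s) * y ≠ 0 := (div_ne_zero_iff.1 (slitPlane_ne_zero hs)).1
  field_simp

/- The error is controlled by `y / (1 - y)²` and not just by `(y / (1 - y))²`: only the former has a
sum over `y = p^j z` that stays bounded for large `z`. -/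
lemma norm_log_one_sub_exp_neg_mul_div_sub_le {s y : ℂ} (hy : y ≠ 1) (hs : ‖s‖ ≤ 1)
    (hsy : 4 * (‖s‖ * ‖y‖) ≤ ‖1 - y‖) :
    ‖log ((1 - exp (-s) * y) / (1 - y)) - s * (y / (1 - y))‖
      ≤ 4 * ‖s‖ ^ 2 * (‖y‖ / ‖1 - y‖ ^ 2) := by
  have hy0 : 1 - y ≠ 0 := sub_ne_zero.2 hy.symm
  have hy0' : 0 < ‖1 - y‖ := norm_pos_iff.2 hy0
  have hball : ∀ σ ∈ Metric.closedBall (0 : ℂ) ‖s‖,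
      ‖σ‖ ≤ ‖s‖ ∧ ‖σ‖ ≤ 1 ∧ 4 * (‖σ‖ * ‖y‖) ≤ ‖1 - y‖ := fun σ hσ => by
    have hle : ‖σ‖ ≤ ‖s‖ := mem_closedBall_zero_iff.1 hσ
    exact ⟨hle, hle.trans hs, le_trans (by gcongr) hsy⟩
  have hderiv : ∀ σ ∈ Metric.closedBall (0 : ℂ) ‖s‖,
      HasDerivWithinAt (fun σ => log ((1 - exp (-σ) * y) / (1 - y)) - σ * (y / (1 - y)))
        (exp (-σ) * y / (1 - exp (-σ) * y) - 1 * (y / (1 - y)))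
        (Metric.closedBall (0 : ℂ) ‖s‖) σ := fun σ hσ =>
    ((hasDerivAt_log_one_sub_exp_neg_mul_div hy
      (one_sub_exp_neg_mul_div_mem_slitPlane hy (hball σ hσ).2.1 (hball σ hσ).2.2)).sub
      ((hasDerivAt_id σ).mul_const _)).hasDerivWithinAt
  have hbound : ∀ σ ∈ Metric.closedBall (0 : ℂ) ‖s‖,
      ‖exp (-σ) * y / (1 - exp (-σ) * y) - 1 * (y / (1 - y))‖
        ≤ 4 * ‖s‖ * (‖y‖ / ‖1 - y‖ ^ 2) := fun σ hσ => by
    obtain ⟨hσs, hσ1, hσy⟩ := hball σ hσ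
    have hden := norm_div_two_le_norm_one_sub_exp_neg_mul hσ1 hσy
    have hden0 : 1 - exp (-σ) * y ≠ 0 := norm_pos_iff.1 (by linarith)
    have hexp : ‖exp (-σ) - 1‖ ≤ 2 * ‖s‖ :=
      (norm_exp_sub_one_le (by rwa [norm_neg])).trans (by rw [norm_neg]; gcongr)
    rw [show exp (-σ) * y / (1 - exp (-σ) * y) - 1 * (y / (1 - y))
      = (exp (-σ) - 1) * y / ((1 - exp (-σ) * y) * (1 - y)) by field_simp; ring]
    calc _ ≤ 2 * ‖s‖ * ‖y‖ / (‖1 - y‖ / 2 * ‖1 - y‖) := by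
          rw [norm_div, norm_mul, norm_mul]; gcongr
      _ = 4 * ‖s‖ * (‖y‖ / ‖1 - y‖ ^ 2) := by field_simp; ring
  have hmean := (convex_closedBall (0 : ℂ) ‖s‖).norm_image_sub_le_of_norm_hasDerivWithin_le
    hderiv hbound (Metric.mem_closedBall_self (norm_nonneg s)) (mem_closedBall_zero_iff.2 le_rfl)
  simp only [neg_zero, exp_zero, one_mul, div_self hy0, log_one, zero_mul, sub_zero] at hmean
  exact hmean.trans_eq (by ring)

lemma norm_log_one_sub_exp_neg_mul_div_sub_mul_le (c : ℂ) {s y : ℂ} (hy : y ≠ 1)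
    (hs : (1 + ‖c‖) * ‖s‖ ≤ 1) (hsy : 4 * ((1 + ‖c‖) * ‖s‖ * ‖y‖) ≤ ‖1 - y‖) :
    ‖log ((1 - exp (-(c * s)) * y) / (1 - y)) - c * log ((1 - exp (-s) * y) / (1 - y))‖
      ≤ 4 * (‖c‖ ^ 2 + ‖c‖) * ‖s‖ ^ 2 * (‖y‖ / ‖1 - y‖ ^ 2) := by
  have hs1 : ‖s‖ ≤ (1 + ‖c‖) * ‖s‖ := le_mul_of_one_le_left (by positivity) (by simp)
  have hcs : ‖c * s‖ ≤ (1 + ‖c‖) * ‖s‖ := by rw [norm_mul]; gcongr; simp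
  have hone := norm_log_one_sub_exp_neg_mul_div_sub_le hy (hs1.trans hs)
    (le_trans (by gcongr) hsy)
  have hc := norm_log_one_sub_exp_neg_mul_div_sub_le hy (hcs.trans hs) (le_trans (by gcongr) hsy)
  rw [norm_mul] at hc
  calc _ = ‖(log ((1 - exp (-(c * s)) * y) / (1 - y)) - c * s * (y / (1 - y)))
          - c * (log ((1 - exp (-s) * y) / (1 - y)) - s * (y / (1 - y)))‖ := by ring_nf
    _ ≤ 4 * (‖c‖ * ‖s‖) ^ 2 * (‖y‖ / ‖1 - y‖ ^ 2)
          + ‖c‖ * (4 * ‖s‖ ^ 2 * (‖y‖ / ‖1 - y‖ ^ 2)) := by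
        refine (norm_sub_le _ _).trans (add_le_add hc ?_)
        rw [norm_mul]; gcongr
    _ = _ := by ring

lemma log_div_of_mem_slitPlane {u v : ℂ} (hu : u ∈ slitPlane) (hv : v ∈ slitPlane)
    (him : 0 ≤ u.im * v.im) : log (v / u) = log v - log u := by
  have hu' := mem_slitPlane_iff_arg.1 hu
  have hv' := mem_slitPlane_iff_arg.1 hv
  have hargs : arg v + arg u⁻¹ ∈ Set.Ioc (-Real.pi) Real.pi := by
    rw [arg_inv, if_neg hu'.1]
    have hu_lt := (arg_le_pi u).lt_of_ne hu'.1
    have hv_lt := (arg_le_pi v).lt_of_ne hv'.1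
    have hu_gt := neg_pi_lt_arg u
    have hv_gt := neg_pi_lt_arg v
    have hu_sign := arg_nonneg_iff (z := u)
    have hv_sign := arg_nonneg_iff (z := v)
    rcases mul_nonneg_iff.1 him with ⟨hu0, hv0⟩ | ⟨hu0, hv0⟩
    · constructor <;> linarith [hu_sign.2 hu0, hv_sign.2 hv0]
    · have nonpos : ∀ {z : ℂ}, z ∈ slitPlane → z.im ≤ 0 → arg z ≤ 0 := fun hz hz0 => by
        rcases hz0.lt_or_eq with hlt | heq
        · exact (arg_neg_iff.2 hlt).le
        · have hre := (mem_slitPlane_iff.1 hz).resolve_right (not_not.2 heq)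
          exact (arg_eq_zero_iff.2 ⟨hre.le, heq⟩).le
      constructor <;> linarith [nonpos hu hu0, nonpos hv hv0]
  rw [div_eq_mul_inv, log_mul hv'.2 (inv_ne_zero hu'.2) hargs, log_inv _ hu'.1, sub_eq_add_neg]

/-! ### Sectors -/

/-- The point `w` lies in a sector around the positive real axis, quantitatively: nonnegative
combinations of `1` and `w` do not cancel. -/
def SectorBound (κ : ℝ) (w : ℂ) : Prop :=
  ∀ a b : ℝ, 0 ≤ a → 0 ≤ b → κ * (a + b) ≤ ‖(a + b * w : ℂ)‖

lemma exists_sectorBound_of_isCompact {K : Set ℂ} (hK : IsCompact K) (hKs : K ⊆ slitPlane) :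
    ∃ κ : ℝ, 0 < κ ∧ ∀ w ∈ K, SectorBound κ w := by
  obtain ⟨κ, hκ, hmin⟩ := (isCompact_Icc.prod hK).exists_forall_le'
    (f := fun y : ℝ × ℂ => ‖(1 : ℂ) + y.1 • (y.2 - 1)‖) (s := Set.Icc 0 1 ×ˢ K) (by fun_prop)
    (a := 0) fun y hy => norm_pos_iff.2 <| slitPlane_ne_zero <|
      starConvex_one_slitPlane.add_smul_sub_mem (hKs hy.2) hy.1.1 hy.1.2
  refine ⟨κ, hκ, fun w hw a b ha hb => ?_⟩
  rcases (add_nonneg ha hb).eq_or_lt with hab | hab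
  · simp [← hab]
  have hnormalized := hmin (b / (a + b), w)
    ⟨⟨by positivity, (div_le_one hab).2 (by linarith)⟩, hw⟩
  have hab' : (a + b : ℂ) ≠ 0 := mod_cast hab.ne'
  have hfactor : (a + b * w : ℂ) = ((a + b : ℝ) : ℂ) * (1 + (b / (a + b)) • (w - 1)) := by
    rw [real_smul]; push_cast; field_simp; ring
  rw [hfactor, norm_mul, norm_real, Real.norm_of_nonneg hab.le, mul_comm]
  gcongr

namespace SectorBound

variable {κ : ℝ} {w : ℂ}

lemma mem_slitPlane (hw : SectorBound κ w) (hκ : 0 < κ) : w ∈ slitPlane := by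
  rw [mem_slitPlane_iff]
  by_contra! hcon
  have hcancel : ((-w.re : ℝ) + (1 : ℝ) * w : ℂ) = 0 := by apply Complex.ext <;> simp [hcon.2]
  have := hw (-w.re) 1 (by linarith [hcon.1]) zero_le_one
  rw [hcancel, norm_zero] at this
  nlinarith [hcon.1]

lemma le_norm (hw : SectorBound κ w) : κ ≤ ‖w‖ := by
  simpa using hw 0 1 le_rfl zero_le_one

end SectorBound

lemma ofReal_add_ofReal_mul_mem_slitPlane {w : ℂ} (hw : w ∈ slitPlane) {a b : ℝ} (ha : 0 ≤ a)
    (hb : 0 < b) : (a + b * w : ℂ) ∈ slitPlane := by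
  rw [mem_slitPlane_iff] at hw ⊢
  rcases hw with hre | him
  · left; simp only [add_re, ofReal_re, re_ofReal_mul]; positivity
  · right; simpa [hb.ne'] using him

/-! ### A telescoping series -/

/-- The denominator `1 - p^j z(x)` at the model point `x = -1`, where `z(-1) = p - t` with
`t = (1 - p)/h`. Up to a constant it bounds `‖1 - p^j z(x)‖` from below when `-x` lies in a
sector. -/
def modelDenom (p t : ℝ) (j : ℕ) : ℝ := 1 - p ^ j * (p - t)

section modelDenom

variable {p t : ℝ}

lemma pow_mul_le_modelDenom (hp0 : 0 ≤ p) (hp1 : p ≤ 1) (j : ℕ) :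
    p ^ j * t ≤ modelDenom p t j := by
  have : p ^ (j + 1) ≤ 1 := pow_le_one₀ hp0 hp1
  rw [modelDenom, mul_sub, ← pow_succ]
  linarith

lemma modelDenom_pos (hp0 : 0 < p) (hp1 : p ≤ 1) (ht : 0 < t) (j : ℕ) : 0 < modelDenom p t j :=
  (by positivity : 0 < p ^ j * t).trans_le (pow_mul_le_modelDenom hp0.le hp1 j)

lemma modelDenom_succ_le (hp0 : 0 ≤ p) (hp1 : p ≤ 1) (ht : 0 ≤ t) (j : ℕ) :
    modelDenom p t (j + 1) ≤ 2 * modelDenom p t j := by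
  have hpow : p ^ j ≤ 1 := pow_le_one₀ hp0 hp1
  have hsq : 0 ≤ p ^ j * (1 - p) ^ 2 := by positivity
  have hpt : 0 ≤ p ^ j * t * (2 - p) := mul_nonneg (by positivity) (by linarith)
  rw [modelDenom, modelDenom, pow_succ]
  linarith

lemma pow_div_modelDenom_sub (hp0 : 0 < p) (hp1 : p ≤ 1) (ht : 0 < t) (j : ℕ) :
    p ^ j / modelDenom p t j - p ^ (j + 1) / modelDenom p t (j + 1)
      = (1 - p) * p ^ j / (modelDenom p t j * modelDenom p t (j + 1)) := by
  rw [div_sub_div _ _ (modelDenom_pos hp0 hp1 ht j).ne' (modelDenom_pos hp0 hp1 ht (j + 1)).ne']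
  congr 1
  unfold modelDenom
  ring

lemma hasSum_pow_div_modelDenom_mul_succ (hp0 : 0 < p) (hp1 : p < 1) (ht : 0 < t) :
    HasSum (fun j => (1 - p) * p ^ j / (modelDenom p t j * modelDenom p t (j + 1)))
      (1 / (1 - p + t)) := by
  have hpos := modelDenom_pos hp0 hp1.le ht
  have hpow := tendsto_pow_atTop_nhds_zero_of_lt_one hp0.le hp1
  have hden : Tendsto (fun N => modelDenom p t N) atTop (𝓝 1) := by
    simpa [modelDenom] using (hpow.mul_const (p - t)).const_sub 1
  have hquot : Tendsto (fun N => p ^ N / modelDenom p t N) atTop (𝓝 0) := by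
    simpa [Pi.div_def] using hpow.div hden one_ne_zero
  rw [hasSum_iff_tendsto_nat_of_nonneg fun j => by
    have := hpos j; have := hpos (j + 1); have := sub_pos.2 hp1; positivity]
  simp only [← pow_div_modelDenom_sub hp0 hp1.le ht, Finset.sum_range_sub']
  have hstart : p ^ 0 / modelDenom p t 0 = 1 / (1 - p + t) := by simp [modelDenom, sub_add]
  rw [hstart]
  simpa using hquot.const_sub (1 / (1 - p + t))

lemma pow_div_modelDenom_sq_le (hp0 : 0 < p) (hp1 : p < 1) (ht : 0 < t) (j : ℕ) :
    p ^ j / modelDenom p t j ^ 2 ≤ 2 / (1 - p)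
      * ((1 - p) * p ^ j / (modelDenom p t j * modelDenom p t (j + 1))) := by
  have hj := modelDenom_pos hp0 hp1.le ht j
  have hj' := modelDenom_pos hp0 hp1.le ht (j + 1)
  have hp : 1 - p ≠ 0 := (sub_pos.2 hp1).ne'
  calc p ^ j / modelDenom p t j ^ 2
      = 2 * p ^ j / (modelDenom p t j * (2 * modelDenom p t j)) := by field_simp
    _ ≤ 2 * p ^ j / (modelDenom p t j * modelDenom p t (j + 1)) := by
        gcongr; exact modelDenom_succ_le hp0.le hp1.le ht.le j
    _ = _ := by field_simp

end modelDenom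

/-! ### Logarithms of the infinite product -/

/-- A logarithm of the reciprocal of the `j`-th factor of `(z; p)_∞ / (P z; p)_∞`. -/
def logFactor (p P z : ℂ) (j : ℕ) : ℂ := log ((1 - P * (p ^ j * z)) / (1 - p ^ j * z))

section logFactor

variable {p P z : ℂ}

lemma tendsto_one_sub_pow_mul (hp : ‖p‖ < 1) :
    Tendsto (fun j : ℕ => 1 - p ^ j * z) atTop (𝓝 1) := by
  simpa using ((tendsto_pow_atTop_nhds_zero_of_norm_lt_one hp).mul_const z).const_sub 1

lemma summable_logFactor (hp : ‖p‖ < 1) (hf : ∀ j : ℕ, 1 - p ^ j * z ≠ 0) :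
    Summable (logFactor p P z) := by
  have hinv : (fun j : ℕ => (1 - p ^ j * z)⁻¹) =O[atTop] fun _ => (1 : ℂ) :=
    ((tendsto_one_sub_pow_mul hp).inv₀ one_ne_zero).isBigO_one ℂ
  have hbigO : (fun j : ℕ => (1 - P) * z * (p ^ j * (1 - p ^ j * z)⁻¹)) =O[atTop]
      fun j : ℕ => p ^ j := by
    simpa only [mul_one] using
      ((Asymptotics.isBigO_refl (fun j : ℕ => p ^ j) atTop).mul hinv).const_mul_left ((1 - P) * z)
  have hsummable : Summable fun j : ℕ => (1 - P) * z * (p ^ j * (1 - p ^ j * z)⁻¹) :=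
    summable_of_isBigO_nat (summable_geometric_of_norm_lt_one hp).norm hbigO.norm_right
  refine (summable_log_one_add_of_summable hsummable).congr fun j => congrArg log ?_
  linear_combination -mul_inv_cancel₀ (hf j)

lemma tprod_eq_exp_neg_tsum_logFactor (hp : ‖p‖ < 1) (hf : ∀ j : ℕ, 1 - p ^ j * z ≠ 0)
    (hP : ∀ j : ℕ, 1 - P * (p ^ j * z) ≠ 0) :
    ∏' j : ℕ, (1 - p ^ j * z) / (1 - P * (p ^ j * z)) = exp (-∑' j, logFactor p P z j) := by
  rw [← ((summable_logFactor hp hf).hasSum.neg).cexp.tprod_eq]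
  refine tprod_congr fun j => ?_
  rw [Function.comp_apply, exp_neg, logFactor, exp_log (div_ne_zero (hP j) (hf j)), inv_div]

lemma tsum_logFactor_self (hp : ‖p‖ < 1) (hf : ∀ j : ℕ, 1 - p ^ j * z ≠ 0)
    (hlog : ∀ j : ℕ, log ((1 - p ^ (j + 1) * z) / (1 - p ^ j * z))
      = log (1 - p ^ (j + 1) * z) - log (1 - p ^ j * z)) :
    ∑' j, logFactor p p z j = -log (1 - z) := by
  have hterm : ∀ j, logFactor p p z j = log (1 - p ^ (j + 1) * z) - log (1 - p ^ j * z) :=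
    fun j => by rw [← hlog j, logFactor, pow_succ', mul_assoc]
  refine tendsto_nhds_unique (summable_logFactor hp hf).hasSum.tendsto_sum_nat ?_
  simp only [hterm, Finset.sum_range_sub (fun j => log (1 - p ^ j * z))]
  simpa using ((tendsto_one_sub_pow_mul hp).clog one_mem_slitPlane).sub_const (log (1 - z))

end logFactor

/-! ### Characters -/

/-- A logarithm of the character `e_c^{(q,h)}`. Adding up the principal logarithms of the factors
selects the branch that tends to `c log (-x)`. -/
def logEchar (q h : ℝ) (c x : ℂ) : ℂ :=
  c * Real.log (h / (1 - q⁻¹)) - ∑' j, logFactor (q : ℂ)⁻¹ (exp (-(c * Real.log q))) (zc q h x) j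

section logEchar

variable {q h κ R : ℝ} {c x : ℂ}

lemma norm_ofReal_inv_lt_one (hq : 1 < q) : ‖(q : ℂ)⁻¹‖ < 1 := by
  rw [norm_inv, norm_real, Real.norm_of_nonneg (by positivity)]
  exact inv_lt_one_of_one_lt₀ hq

lemma charTerm_eq (hq : 0 < q) (j : ℕ) :
    charTerm q h c x j = (1 - (q : ℂ)⁻¹ ^ j * zc q h x)
      / (1 - exp (-(c * Real.log q)) * ((q : ℂ)⁻¹ ^ j * zc q h x)) := by
  have hexp : exp (((j : ℂ) + c) * Real.log q⁻¹) = (q : ℂ)⁻¹ ^ j * exp (-(c * Real.log q)) := by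
    rw [add_mul, exp_add, exp_nat_mul, ← ofReal_exp, Real.exp_log (inv_pos.2 hq), Real.log_inv]
    push_cast
    rw [mul_neg]
  rw [charTerm, hexp, mul_left_comm, mul_assoc]

lemma one_sub_pow_mul_zc (j : ℕ) :
    1 - (q : ℂ)⁻¹ ^ j * zc q h x
      = (1 - q⁻¹ ^ (j + 1) : ℝ) + (q⁻¹ ^ j * ((1 - q⁻¹) / h) : ℝ) * -x := by
  rw [zc]
  push_cast
  field_simp
  ring

lemma one_sub_pow_mul_zc_mem_slitPlane (hq : 1 < q) (hh : 0 < h) (hx : -x ∈ slitPlane) (j : ℕ) :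
    1 - (q : ℂ)⁻¹ ^ j * zc q h x ∈ slitPlane := by
  have hp1 : q⁻¹ < 1 := inv_lt_one_of_one_lt₀ hq
  rw [one_sub_pow_mul_zc]
  refine ofReal_add_ofReal_mul_mem_slitPlane hx
    (sub_nonneg.2 (pow_le_one₀ (by positivity) hp1.le)) ?_
  have := sub_pos.2 hp1
  positivity

lemma tsum_logFactor_zc (hq : 1 < q) (hh : 0 < h) (hx : -x ∈ slitPlane) :
    ∑' j, logFactor (q : ℂ)⁻¹ (q : ℂ)⁻¹ (zc q h x) j = -log (1 - zc q h x) := by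
  have hslit := one_sub_pow_mul_zc_mem_slitPlane hq hh hx
  refine tsum_logFactor_self (norm_ofReal_inv_lt_one hq) (fun j => slitPlane_ne_zero (hslit j))
    fun j => log_div_of_mem_slitPlane (hslit j) (hslit (j + 1)) ?_
  have : 0 ≤ 1 - q⁻¹ := sub_nonneg.2 (inv_le_one_of_one_le₀ hq.le)
  rw [one_sub_pow_mul_zc, one_sub_pow_mul_zc]
  simp only [add_im, ofReal_im, im_ofReal_mul, zero_add]
  rw [mul_mul_mul_comm]
  exact mul_nonneg (by positivity) (mul_self_nonneg _)

lemma mul_modelDenom_le_norm (hκ : SectorBound κ (-x)) (hq : 1 ≤ q) (hh : 0 < h) (j : ℕ) :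
    κ * modelDenom q⁻¹ ((1 - q⁻¹) / h) j ≤ ‖1 - (q : ℂ)⁻¹ ^ j * zc q h x‖ := by
  have hp1 : q⁻¹ ≤ 1 := inv_le_one_of_one_le₀ hq
  have : 0 ≤ 1 - q⁻¹ := sub_nonneg.2 hp1
  have hsector := hκ (1 - q⁻¹ ^ (j + 1)) (q⁻¹ ^ j * ((1 - q⁻¹) / h))
    (sub_nonneg.2 (pow_le_one₀ (by positivity) hp1)) (by positivity)
  rw [← one_sub_pow_mul_zc] at hsector
  convert hsector using 2
  rw [modelDenom]
  ring

lemma norm_zc_le (hq : 1 < q) (hh : 0 < h) (hxR : ‖x‖ ≤ R) :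
    ‖zc q h x‖ ≤ (1 - q⁻¹) / h * (h / (1 - q⁻¹) + R) := by
  have hp : 0 < 1 - q⁻¹ := sub_pos.2 (inv_lt_one_of_one_lt₀ hq)
  have hcoeff : zc q h x = ((1 - q⁻¹) / h : ℝ) * x + (q : ℂ)⁻¹ := by
    rw [zc]; push_cast; ring
  have hinv : ‖(q : ℂ)⁻¹‖ ≤ 1 := (norm_ofReal_inv_lt_one hq).le
  calc ‖zc q h x‖ ≤ (1 - q⁻¹) / h * R + 1 := by
        rw [hcoeff]
        refine (norm_add_le _ _).trans (add_le_add ?_ hinv)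
        rw [norm_mul, norm_real, Real.norm_of_nonneg (by positivity)]
        gcongr
    _ = (1 - q⁻¹) / h * (h / (1 - q⁻¹) + R) := by
        rw [mul_add, div_mul_div_cancel₀ hh.ne', div_self hp.ne', add_comm]

lemma sub_one_mul_div_one_sub_inv_add_le (hq1 : 1 < q) (hq2 : q ≤ 2) (hh : 0 ≤ h) :
    (q - 1) * (h / (1 - q⁻¹) + R) ≤ 2 * h + R * (q - 1) := by
  have hq : q - 1 ≠ 0 := (sub_pos.2 hq1).ne'
  calc (q - 1) * (h / (1 - q⁻¹) + R) = q * h + R * (q - 1) := by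
        rw [show 1 - q⁻¹ = (q - 1) / q by field_simp]; field_simp
    _ ≤ 2 * h + R * (q - 1) := by gcongr

lemma mul_log_mul_norm_pow_mul_zc_le (hκ0 : 0 ≤ κ) (hκ : SectorBound κ (-x)) (hq1 : 1 < q)
    (hq2 : q ≤ 2) (hh : 0 < h) (hxR : ‖x‖ ≤ R) (j : ℕ) :
    κ * (Real.log q * ‖(q : ℂ)⁻¹ ^ j * zc q h x‖)
      ≤ (2 * h + R * (q - 1)) * ‖1 - (q : ℂ)⁻¹ ^ j * zc q h x‖ := by
  have hq0 : 0 < q := by positivity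
  have hp1 : q⁻¹ < 1 := inv_lt_one_of_one_lt₀ hq1
  have : 0 < 1 - q⁻¹ := sub_pos.2 hp1
  have hR : 0 ≤ R := (norm_nonneg x).trans hxR
  have hden : κ * (q⁻¹ ^ j * ((1 - q⁻¹) / h)) ≤ ‖1 - (q : ℂ)⁻¹ ^ j * zc q h x‖ :=
    le_trans (by gcongr; exact pow_mul_le_modelDenom (by positivity) hp1.le j)
      (mul_modelDenom_le_norm hκ hq1.le hh j)
  calc κ * (Real.log q * ‖(q : ℂ)⁻¹ ^ j * zc q h x‖)
      ≤ κ * ((q - 1) * (q⁻¹ ^ j * ((1 - q⁻¹) / h * (h / (1 - q⁻¹) + R)))) := by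
        rw [norm_mul, norm_pow, norm_inv, norm_real, Real.norm_of_nonneg hq0.le]
        gcongr
        · exact Real.log_le_sub_one_of_pos hq0
        · exact norm_zc_le hq1 hh hxR
    _ = (q - 1) * (h / (1 - q⁻¹) + R) * (κ * (q⁻¹ ^ j * ((1 - q⁻¹) / h))) := by ring
    _ ≤ (2 * h + R * (q - 1)) * ‖1 - (q : ℂ)⁻¹ ^ j * zc q h x‖ := by
        have := sub_pos.2 hq1
        gcongr
        exact sub_one_mul_div_one_sub_inv_add_le hq1 hq2 hh.le

lemma norm_pow_mul_zc_div_norm_sq_le (hκ0 : 0 < κ) (hκ : SectorBound κ (-x)) (hq : 1 < q)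
    (hh : 0 < h) (j : ℕ) :
    ‖(q : ℂ)⁻¹ ^ j * zc q h x‖ / ‖1 - (q : ℂ)⁻¹ ^ j * zc q h x‖ ^ 2
      ≤ ‖zc q h x‖ / κ ^ 2 * (2 / (1 - q⁻¹)) * ((1 - q⁻¹) * q⁻¹ ^ j
        / (modelDenom q⁻¹ ((1 - q⁻¹) / h) j * modelDenom q⁻¹ ((1 - q⁻¹) / h) (j + 1))) := by
  have hq0 : 0 < q := by positivity
  have hp1 : q⁻¹ < 1 := inv_lt_one_of_one_lt₀ hq
  have ht : 0 < (1 - q⁻¹) / h := div_pos (sub_pos.2 hp1) hh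
  have hD := modelDenom_pos (inv_pos.2 hq0) hp1.le ht j
  calc _ ≤ q⁻¹ ^ j * ‖zc q h x‖ / (κ * modelDenom q⁻¹ ((1 - q⁻¹) / h) j) ^ 2 := by
        rw [norm_mul, norm_pow, norm_inv, norm_real, Real.norm_of_nonneg hq0.le]
        gcongr
        exact mul_modelDenom_le_norm hκ hq.le hh j
    _ = ‖zc q h x‖ / κ ^ 2 * (q⁻¹ ^ j / modelDenom q⁻¹ ((1 - q⁻¹) / h) j ^ 2) := by
        field_simp
    _ ≤ _ := by
        rw [mul_assoc]
        gcongr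
        exact pow_div_modelDenom_sq_le (inv_pos.2 hq0) hp1 ht j

lemma log_sq_div_one_sub_inv_le (hq1 : 1 < q) (hq2 : q ≤ 2) :
    Real.log q ^ 2 / (1 - q⁻¹) ≤ 2 * (q - 1) := by
  have hq : 0 < q - 1 := sub_pos.2 hq1
  have hlog0 : 0 ≤ Real.log q := Real.log_nonneg hq1.le
  have hp : 1 - q⁻¹ = (q - 1) / q := by field_simp
  calc Real.log q ^ 2 / (1 - q⁻¹) ≤ (q - 1) ^ 2 / ((q - 1) / q) := by
        rw [hp]; gcongr; exact Real.log_le_sub_one_of_pos (by positivity)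
    _ = q * (q - 1) := by field_simp
    _ ≤ 2 * (q - 1) := by gcongr

lemma log_sq_mul_norm_zc_mul_le (hq1 : 1 < q) (hq2 : q ≤ 2) (hh : 0 < h) (hxR : ‖x‖ ≤ R) :
    Real.log q ^ 2 * (‖zc q h x‖ * (2 / (1 - q⁻¹)) * (1 / (1 - q⁻¹ + (1 - q⁻¹) / h)))
      ≤ 4 * (2 * h + R * (q - 1)) := by
  have hR : 0 ≤ R := (norm_nonneg x).trans hxR
  have hp : 0 < 1 - q⁻¹ := sub_pos.2 (inv_lt_one_of_one_lt₀ hq1)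
  have ht : 0 < (1 - q⁻¹) / h := div_pos hp hh
  calc Real.log q ^ 2 * (‖zc q h x‖ * (2 / (1 - q⁻¹)) * (1 / (1 - q⁻¹ + (1 - q⁻¹) / h)))
      ≤ Real.log q ^ 2 * ((1 - q⁻¹) / h * (h / (1 - q⁻¹) + R) * (2 / (1 - q⁻¹)) *
          (1 / ((1 - q⁻¹) / h))) := by
        gcongr
        · exact norm_zc_le hq1 hh hxR
        · linarith
    _ = 2 * (Real.log q ^ 2 / (1 - q⁻¹) * (h / (1 - q⁻¹) + R)) := by
        rw [mul_assoc ((1 - q⁻¹) / h), mul_right_comm, mul_one_div_cancel ht.ne']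
        ring
    _ ≤ 2 * (2 * (q - 1) * (h / (1 - q⁻¹) + R)) := by
        gcongr; exact log_sq_div_one_sub_inv_le hq1 hq2
    _ = 4 * ((q - 1) * (h / (1 - q⁻¹) + R)) := by ring
    _ ≤ 4 * (2 * h + R * (q - 1)) := by
        gcongr; exact sub_one_mul_div_one_sub_inv_add_le hq1 hq2 hh.le

/-- The scale `(q, h)` is fine enough, for the exponent `c`, that on the points `x` with `‖x‖ ≤ R`
and `SectorBound κ (-x)` every factor of the product defining `echar q h c x` is close to `1`. -/
structure IsSmallScale (c : ℂ) (κ R q h : ℝ) : Prop where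
  one_lt : 1 < q
  pos : 0 < h
  mul_sub_one_le_one : (1 + ‖c‖) * (q - 1) ≤ 1
  four_mul_mul_add_le : 4 * (1 + ‖c‖) * (2 * h + R * (q - 1)) ≤ κ

lemma IsSmallScale.le_two (hs : IsSmallScale c κ R q h) : q ≤ 2 := by
  nlinarith [norm_nonneg c, hs.one_lt, hs.mul_sub_one_le_one]

lemma IsSmallScale.mul_norm_log_le_one (hs : IsSmallScale c κ R q h) :
    (1 + ‖c‖) * ‖(Real.log q : ℂ)‖ ≤ 1 := by
  have hq : 0 < q := one_pos.trans hs.one_lt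
  rw [norm_real, Real.norm_of_nonneg (Real.log_nonneg hs.one_lt.le)]
  exact le_trans (by gcongr; exact Real.log_le_sub_one_of_pos hq) hs.mul_sub_one_le_one

lemma four_mul_norm_log_mul_norm_le (hκ0 : 0 < κ) (hκ : SectorBound κ (-x)) (hxR : ‖x‖ ≤ R)
    (hs : IsSmallScale c κ R q h) (j : ℕ) :
    4 * ((1 + ‖c‖) * ‖(Real.log q : ℂ)‖ * ‖(q : ℂ)⁻¹ ^ j * zc q h x‖)
      ≤ ‖1 - (q : ℂ)⁻¹ ^ j * zc q h x‖ := by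
  have hbase := mul_log_mul_norm_pow_mul_zc_le hκ0.le hκ hs.one_lt hs.le_two hs.pos hxR j
  rw [norm_real, Real.norm_of_nonneg (Real.log_nonneg hs.one_lt.le)]
  refine le_of_mul_le_mul_left ?_ hκ0
  calc κ * (4 * ((1 + ‖c‖) * Real.log q * ‖(q : ℂ)⁻¹ ^ j * zc q h x‖))
      = 4 * (1 + ‖c‖) * (κ * (Real.log q * ‖(q : ℂ)⁻¹ ^ j * zc q h x‖)) := by ring
    _ ≤ 4 * (1 + ‖c‖) * ((2 * h + R * (q - 1)) * ‖1 - (q : ℂ)⁻¹ ^ j * zc q h x‖) := by gcongr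
    _ ≤ κ * ‖1 - (q : ℂ)⁻¹ ^ j * zc q h x‖ := by
        rw [← mul_assoc]; gcongr; exact hs.four_mul_mul_add_le

lemma norm_logFactor_sub_le (hκ0 : 0 < κ) (hκ : SectorBound κ (-x)) (hxR : ‖x‖ ≤ R)
    (hs : IsSmallScale c κ R q h) (j : ℕ) :
    ‖logFactor (q : ℂ)⁻¹ (exp (-(c * Real.log q))) (zc q h x) j
        - c * logFactor (q : ℂ)⁻¹ (q : ℂ)⁻¹ (zc q h x) j‖
      ≤ 4 * (‖c‖ ^ 2 + ‖c‖) * Real.log q ^ 2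
        * (‖(q : ℂ)⁻¹ ^ j * zc q h x‖ / ‖1 - (q : ℂ)⁻¹ ^ j * zc q h x‖ ^ 2) := by
  have hq := hs.one_lt
  have hh := hs.pos
  have hinv : (q : ℂ)⁻¹ = exp (-(Real.log q)) := by
    rw [exp_neg, ← ofReal_exp, Real.exp_log (by positivity)]
  have hne := slitPlane_ne_zero (one_sub_pow_mul_zc_mem_slitPlane hq hh (hκ.mem_slitPlane hκ0) j)
  have hquot := norm_log_one_sub_exp_neg_mul_div_sub_mul_le c (sub_ne_zero.1 hne).symm
    hs.mul_norm_log_le_one (four_mul_norm_log_mul_norm_le hκ0 hκ hxR hs j)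
  rwa [← hinv, norm_real, Real.norm_eq_abs, sq_abs] at hquot

lemma norm_tsum_logFactor_sub_le (hκ0 : 0 < κ) (hκ : SectorBound κ (-x)) (hxR : ‖x‖ ≤ R)
    (hs : IsSmallScale c κ R q h) :
    ‖∑' j, logFactor (q : ℂ)⁻¹ (exp (-(c * Real.log q))) (zc q h x) j
        - c * ∑' j, logFactor (q : ℂ)⁻¹ (q : ℂ)⁻¹ (zc q h x) j‖
      ≤ 16 * (‖c‖ ^ 2 + ‖c‖) / κ ^ 2 * (2 * h + R * (q - 1)) := by
  have hq := hs.one_lt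
  have hh := hs.pos
  have hp1 : q⁻¹ < 1 := inv_lt_one_of_one_lt₀ hq
  have hp : 0 < 1 - q⁻¹ := sub_pos.2 hp1
  have ht : 0 < (1 - q⁻¹) / h := div_pos hp hh
  have hsummable : ∀ P, Summable (logFactor (q : ℂ)⁻¹ P (zc q h x)) := fun P =>
    summable_logFactor (norm_ofReal_inv_lt_one hq) fun j =>
      slitPlane_ne_zero (one_sub_pow_mul_zc_mem_slitPlane hq hh (hκ.mem_slitPlane hκ0) j)
  have hsum := ((hasSum_pow_div_modelDenom_mul_succ (by positivity) hp1 ht).mul_left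
    (‖zc q h x‖ / κ ^ 2 * (2 / (1 - q⁻¹)))).mul_left (4 * (‖c‖ ^ 2 + ‖c‖) * Real.log q ^ 2)
  rw [← tsum_mul_left, ← (hsummable _).tsum_sub ((hsummable _).mul_left c)]
  refine (tsum_of_norm_bounded hsum fun j =>
    (norm_logFactor_sub_le hκ0 hκ hxR hs j).trans (by
      gcongr; exact norm_pow_mul_zc_div_norm_sq_le hκ0 hκ hq hh j)).trans ?_
  calc 4 * (‖c‖ ^ 2 + ‖c‖) * Real.log q ^ 2 *
        (‖zc q h x‖ / κ ^ 2 * (2 / (1 - q⁻¹)) * (1 / (1 - q⁻¹ + (1 - q⁻¹) / h)))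
      = 4 * (‖c‖ ^ 2 + ‖c‖) / κ ^ 2 * (Real.log q ^ 2 *
        (‖zc q h x‖ * (2 / (1 - q⁻¹)) * (1 / (1 - q⁻¹ + (1 - q⁻¹) / h)))) := by ring
    _ ≤ 4 * (‖c‖ ^ 2 + ‖c‖) / κ ^ 2 * (4 * (2 * h + R * (q - 1))) := by
        exact mul_le_mul_of_nonneg_left (log_sq_mul_norm_zc_mul_le hq hs.le_two hh hxR)
          (by positivity)
    _ = 16 * (‖c‖ ^ 2 + ‖c‖) / κ ^ 2 * (2 * h + R * (q - 1)) := by ring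

lemma exp_logEchar (hκ0 : 0 < κ) (hκ : SectorBound κ (-x)) (hxR : ‖x‖ ≤ R)
    (hs : IsSmallScale c κ R q h) :
    exp (logEchar q h c x) = echar q h c x := by
  have hq := hs.one_lt
  have hh := hs.pos
  have hratio : 0 < h / (1 - q⁻¹) := div_pos hh (sub_pos.2 (inv_lt_one_of_one_lt₀ hq))
  have hden : ∀ j : ℕ, 1 - (q : ℂ)⁻¹ ^ j * zc q h x ≠ 0 := fun j =>
    slitPlane_ne_zero (one_sub_pow_mul_zc_mem_slitPlane hq hh (hκ.mem_slitPlane hκ0) j)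
  have hcs : ‖c * Real.log q‖ ≤ (1 + ‖c‖) * ‖(Real.log q : ℂ)‖ := by
    rw [norm_mul]; gcongr; simp
  have hnum : ∀ j : ℕ, 1 - exp (-(c * Real.log q)) * ((q : ℂ)⁻¹ ^ j * zc q h x) ≠ 0 := fun j => by
    refine norm_pos_iff.1 (lt_of_lt_of_le (half_pos (norm_pos_iff.2 (hden j)))
      (norm_div_two_le_norm_one_sub_exp_neg_mul (hcs.trans hs.mul_norm_log_le_one) ?_))
    exact le_trans (by gcongr) (four_mul_norm_log_mul_norm_le hκ0 hκ hxR hs j)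
  rw [logEchar, sub_eq_add_neg, exp_add,
    ← tprod_eq_exp_neg_tsum_logFactor (norm_ofReal_inv_lt_one hq) hden hnum, echar,
    cpow_def_of_ne_zero (mod_cast hratio.ne'), ← ofReal_log hratio.le, mul_comm c]
  congr 1
  exact tprod_congr fun j => (charTerm_eq (by positivity) j).symm

lemma log_add_log_one_sub_zc (hq : 1 < q) (hh : 0 < h) (hx : -x ∈ slitPlane) :
    Real.log (h / (1 - q⁻¹)) + log (1 - zc q h x) = log (h + -x) := by
  have hp : 0 < 1 - q⁻¹ := sub_pos.2 (inv_lt_one_of_one_lt₀ hq)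
  have hne : 1 - zc q h x ≠ 0 := by
    simpa using slitPlane_ne_zero (one_sub_pow_mul_zc_mem_slitPlane hq hh hx 0)
  have hh' : (h : ℂ) ≠ 0 := mod_cast hh.ne'
  have hfactor : 1 - zc q h x = (1 - q⁻¹ : ℝ) * (1 - x / h) := by rw [zc]; push_cast; ring
  rw [← log_ofReal_mul (div_pos hh hp) hne, hfactor, ← mul_assoc, ← ofReal_mul,
    div_mul_cancel₀ _ hp.ne', mul_sub, mul_one, mul_div_cancel₀ _ hh', sub_eq_add_neg]

lemma norm_log_add_sub_log_le (hκ0 : 0 < κ) (hκ : SectorBound κ (-x)) (hh : 0 ≤ h)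
    (hhκ : 2 * h ≤ κ) : ‖log (h + -x) - log (-x)‖ ≤ 3 / 2 * (h / κ) := by
  have hx := hκ.mem_slitPlane hκ0
  have hhx : (h + -x : ℂ) ∈ slitPlane := by
    simpa using ofReal_add_ofReal_mul_mem_slitPlane hx hh one_pos
  have hquot : (h + -x) / -x = 1 + h / -x := by
    rw [add_div, div_self (slitPlane_ne_zero hx), add_comm]
  have hnorm : ‖(h / -x : ℂ)‖ ≤ h / κ := by
    rw [norm_div, norm_real, Real.norm_of_nonneg hh]
    gcongr
    exact hκ.le_norm
  rw [← log_div_of_mem_slitPlane hx hhx (by simpa using mul_self_nonneg x.im), hquot]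
  refine (norm_log_one_add_half_le_self (hnorm.trans ?_)).trans (by gcongr)
  rw [div_le_iff₀ hκ0]
  linarith

lemma norm_logEchar_sub_le (hκ0 : 0 < κ) (hκ : SectorBound κ (-x)) (hxR : ‖x‖ ≤ R)
    (hs : IsSmallScale c κ R q h) :
    ‖logEchar q h c x - c * log (-x)‖
      ≤ ‖c‖ * (3 / 2 * (h / κ)) + 16 * (‖c‖ ^ 2 + ‖c‖) / κ ^ 2 * (2 * h + R * (q - 1)) := by
  have hx := hκ.mem_slitPlane hκ0
  have hhκ : 2 * h ≤ κ := by
    have hRq : 0 ≤ R * (q - 1) := mul_nonneg ((norm_nonneg x).trans hxR) (sub_pos.2 hs.one_lt).le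
    nlinarith [norm_nonneg c, hs.pos, hs.four_mul_mul_add_le]
  have hsplit : logEchar q h c x - c * log (-x) = c * (log (h + -x) - log (-x))
      - (∑' j, logFactor (q : ℂ)⁻¹ (exp (-(c * Real.log q))) (zc q h x) j
        - c * ∑' j, logFactor (q : ℂ)⁻¹ (q : ℂ)⁻¹ (zc q h x) j) := by
    rw [logEchar, tsum_logFactor_zc hs.one_lt hs.pos hx,
      ← log_add_log_one_sub_zc hs.one_lt hs.pos hx]
    ring
  rw [hsplit]
  refine (norm_sub_le _ _).trans
    (add_le_add ?_ (norm_tsum_logFactor_sub_le hκ0 hκ hxR hs))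
  rw [norm_mul]
  gcongr
  exact norm_log_add_sub_log_le hκ0 hκ hs.pos.le hhκ

end logEchar

section Confluence

variable {ι : Type*} {l : Filter ι} {q h : ι → ℝ} {K : Set ℂ} {κ R : ℝ}

lemma tendsto_two_mul_add_mul_sub_one (R : ℝ) (hq : Tendsto q l (𝓝 1)) (hh : Tendsto h l (𝓝 0)) :
    Tendsto (fun n => 2 * h n + R * (q n - 1)) l (𝓝 0) := by
  simpa using (hh.const_mul 2).add ((hq.sub_const 1).const_mul R)

lemma eventually_isSmallScale (c : ℂ) (R : ℝ) (hκ0 : 0 < κ) (hq : Tendsto q l (𝓝[>] 1))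
    (hh : Tendsto h l (𝓝[>] 0)) : ∀ᶠ n in l, IsSmallScale c κ R (q n) (h n) := by
  obtain ⟨hq1, hq_gt⟩ := tendsto_nhdsWithin_iff.1 hq
  obtain ⟨hh0, hh_pos⟩ := tendsto_nhdsWithin_iff.1 hh
  have hcq : Tendsto (fun n => (1 + ‖c‖) * (q n - 1)) l (𝓝 0) := by
    simpa using (hq1.sub_const 1).const_mul (1 + ‖c‖)
  have hcη : Tendsto (fun n => 4 * (1 + ‖c‖) * (2 * h n + R * (q n - 1))) l (𝓝 0) := by
    simpa using (tendsto_two_mul_add_mul_sub_one R hq1 hh0).const_mul (4 * (1 + ‖c‖))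
  filter_upwards [hq_gt, hh_pos, hcq.eventually_le_const one_pos, hcη.eventually_le_const hκ0]
    with n h_gt h_pos h_log h_dist using ⟨h_gt, h_pos, h_log, h_dist⟩

lemma tendstoUniformlyOn_logEchar (c : ℂ) (hκ0 : 0 < κ) (hκ : ∀ x ∈ K, SectorBound κ (-x))
    (hR : ∀ x ∈ K, ‖x‖ ≤ R) (hq : Tendsto q l (𝓝[>] 1)) (hh : Tendsto h l (𝓝[>] 0)) :
    TendstoUniformlyOn (fun n x => logEchar (q n) (h n) c x) (fun x => c * log (-x)) l K := by
  have hq1 := (tendsto_nhdsWithin_iff.1 hq).1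
  have hh0 := (tendsto_nhdsWithin_iff.1 hh).1
  have herror : Tendsto (fun n => ‖c‖ * (3 / 2 * (h n / κ))
      + 16 * (‖c‖ ^ 2 + ‖c‖) / κ ^ 2 * (2 * h n + R * (q n - 1))) l (𝓝 0) := by
    simpa using (((hh0.div_const κ).const_mul (3 / 2)).const_mul ‖c‖).add
      ((tendsto_two_mul_add_mul_sub_one R hq1 hh0).const_mul (16 * (‖c‖ ^ 2 + ‖c‖) / κ ^ 2))
  rw [Metric.tendstoUniformlyOn_iff]
  intro ε hε
  filter_upwards [eventually_isSmallScale c R hκ0 hq hh, herror.eventually_lt_const hε]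
    with n hs hnε x hx
  rw [dist_comm, dist_eq_norm]
  exact (norm_logEchar_sub_le hκ0 (hκ x hx) (hR x hx) hs).trans_lt hnε

lemma neg_mem_slitPlane_of_forall_ne {x : ℂ} (hx : ∀ t : ℝ, 0 ≤ t → x ≠ t) : -x ∈ slitPlane := by
  rw [mem_slitPlane_iff]
  by_contra! hcon
  simp only [neg_re, neg_im, neg_nonpos, neg_eq_zero] at hcon
  exact hx x.re hcon.1 (Complex.ext rfl hcon.2)

theorem echar_confluence_C3_general (c : ℂ) (hq : Tendsto q l (𝓝[>] 1))
    (hh : Tendsto h l (𝓝[>] 0)) (hK : IsCompact K) (hKd : ∀ x ∈ K, ∀ t : ℝ, 0 ≤ t → x ≠ (t : ℂ)) :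
    TendstoUniformlyOn (fun n x => echar (q n) (h n) c x) (fun x => exp (c * log (-x))) l K := by
  have hslit : ∀ x ∈ K, -x ∈ slitPlane := fun x hx => neg_mem_slitPlane_of_forall_ne (hKd x hx)
  obtain ⟨κ, hκ0, hκneg⟩ := exists_sectorBound_of_isCompact hK.neg fun w hw => by
    simpa using hslit (-w) hw
  have hκ : ∀ x ∈ K, SectorBound κ (-x) := fun x hx => hκneg (-x) (Set.neg_mem_neg.2 hx)
  obtain ⟨R, hR⟩ := hK.isBounded.exists_norm_le
  have hbdd : BddAbove ((fun x => (c * log (-x)).re) '' K) :=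
    hK.bddAbove_image <| continuous_re.comp_continuousOn <|
      continuousOn_const.mul (continuousOn_neg.clog hslit)
  refine ((tendstoUniformlyOn_logEchar c hκ0 hκ hR hq hh).comp_cexp hbdd).congr ?_
  filter_upwards [eventually_isSmallScale c R hκ0 hq hh] with n hs x hx
    using exp_logEchar hκ0 (hκ x hx) (hR x hx) hs

end Confluence

/-- Confluence `C3` of the characters: if `q_n → 1`, `h_n → 0` and
`h_n/(q_n-1) → ℓ ∈ (0,+∞]`, then `e_c^{(q_n,h_n)}` converges, uniformly on compact
subsets of `ℂ ∖ [0,∞)`, to the principal branch of `(-x)^c = exp(c·Log(-x))`. -/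
theorem echar_confluence_C3 (c : ℂ) (q h : ℕ → ℝ)
    (hq : ∀ n, 1 < q n) (hh : ∀ n, 0 < h n)
    (hq1 : Tendsto q atTop (nhds 1)) (hh0 : Tendsto h atTop (nhds 0))
    (hl : (∃ l : ℝ, 0 < l ∧ Tendsto (fun n => h n / (q n - 1)) atTop (nhds l)) ∨
      Tendsto (fun n => h n / (q n - 1)) atTop atTop)
    (K : Set ℂ) (hK : IsCompact K)
    (hKd : ∀ x ∈ K, ∀ t : ℝ, 0 ≤ t → x ≠ (t : ℂ)) :
    TendstoUniformlyOn (fun (n : ℕ) (x : ℂ) => echar (q n) (h n) c x)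
      (fun x : ℂ => Complex.exp (c * Complex.log (-x))) atTop K := by
  exact echar_confluence_C3_general c (tendsto_nhdsWithin_iff.2 ⟨hq1, .of_forall hq⟩)
    (tendsto_nhdsWithin_iff.2 ⟨hh0, .of_forall hh⟩) hK hKd
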